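/- arXiv:2510.01610 — 8 statements merged into one kernel-verified Lean document; each statement's English description precedes it below -/
import Mathlib

section
/- Let b and n be positive integers and let ε be a real number with 0 ≤ ε and ε·b·n < 1. Let I be the bn×bn real matrix whose (i,j) entry is 1 if i ≡ j (mod n) and 0 otherwise, and let E be any bn×bn real matrix all of whose entries have absolute value at most 1. Then the permanent of I + εE satisfies perm(I + εE) ≥ (b!)^n · (1 − εbn/(1 − εbn)). -/
/-!
Expanding each entry of `I + εE` gives one term for every set `S` of columns and every
permutation `σ`, in which the columns of `S` contribute factors of `εE` and the other columns
factors of `I`. Such a term vanishes unless `σ` preserves residues modulo `n` off `S`, and it is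
at most `ε ^ |S|` in absolute value. The set `S = ∅` contributes exactly the number `(b!) ^ n` of
residue-preserving permutations.

The number `T S` of permutations preserving residues off `S` is at most `|S|! * (b!) ^ n`: when a
column `i` is added to `S`, some column `i'` of `S ∪ {i}` is sent to the residue class of `i` (by
counting that class), and composing with the transposition of `i` and `i'` gives
`T (S ∪ {i}) ≤ (|S| + 1) * T S`. Hence the sets of size `k` contribute at most
`ε ^ k * (bn choose k) * k! * (b!) ^ n ≤ (εbn) ^ k * (b!) ^ n`, and the sum over `k ≥ 1` is
dominated by a geometric series.
-/

open Finset in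
/-- The permutations of `α` that preserve the colouring `f` at every point outside `S`. -/
def permsPreservingOff {α κ : Type*} [Fintype α] [DecidableEq α] [DecidableEq κ]
    (f : α → κ) (S : Finset α) : Finset (Equiv.Perm α) :=
  univ.filter fun σ => ∀ j, j ∉ S → f (σ j) = f j

/-- Counting the colour class of `i`: if `σ` preserves colours off `insert i S`, then some point of
`insert i S` is sent to the colour of `i`, since otherwise the preimage of that class would be a
proper subset of the class itself. -/
lemma exists_mem_insert_color_eq {α κ : Type*} [Fintype α] [DecidableEq α] [DecidableEq κ]
    (f : α → κ) (S : Finset α) (i : α) (σ : Equiv.Perm α)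
    (hσ : ∀ j, j ∉ insert i S → f (σ j) = f j) :
    ∃ i' ∈ insert i S, f (σ i') = f i := by
  by_contra! h
  have hlt : (Finset.univ.filter fun j => f (σ j) = f i) ⊂
      (Finset.univ.filter fun j => f j = f i) := by
    rw [Finset.ssubset_iff_of_subset]
    · exact ⟨i, by simp, by simpa using h i (by simp)⟩
    · intro j hj
      simp only [Finset.mem_filter, Finset.mem_univ, true_and] at hj ⊢
      by_cases hjS : j ∈ insert i S
      · exact absurd hj (h j hjS)
      · rw [← hσ j hjS, hj]
  have hcard : (Finset.univ.filter fun j => f (σ j) = f i).card =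
      (Finset.univ.filter fun j => f j = f i).card :=
    Finset.card_equiv σ (by simp)
  exact absurd hcard (Finset.card_lt_card hlt).ne

lemma card_permsPreservingOff_insert_le {α κ : Type*} [Fintype α] [DecidableEq α] [DecidableEq κ]
    (f : α → κ) (S : Finset α) (i : α) (hi : i ∉ S) :
    (permsPreservingOff f (insert i S)).card ≤
      (S.card + 1) * (permsPreservingOff f S).card := by
  classical
  have hex : ∀ σ : Equiv.Perm α, ∃ i' : α, σ ∈ permsPreservingOff f (insert i S) →
      i' ∈ insert i S ∧ f (σ i') = f i := by
    intro σ
    by_cases hσ : σ ∈ permsPreservingOff f (insert i S)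
    · obtain ⟨i', h1, h2⟩ := exists_mem_insert_color_eq f S i σ
        (by simpa [permsPreservingOff] using hσ)
      exact ⟨i', fun _ => ⟨h1, h2⟩⟩
    · exact ⟨i, fun h => absurd h hσ⟩
  choose g hg using hex
  rw [← Finset.card_insert_of_notMem hi, ← Finset.card_product]
  refine Finset.card_le_card_of_injOn (fun σ => (g σ, σ * Equiv.swap i (g σ))) ?_ ?_
  · intro σ hσ
    obtain ⟨h1, h2⟩ := hg σ hσ
    refine Finset.mem_product.2 ⟨h1, ?_⟩
    have hσ' : ∀ j, j ∉ insert i S → f (σ j) = f j := by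
      simpa [permsPreservingOff] using hσ
    simp only [permsPreservingOff, Finset.mem_filter, Finset.mem_univ, true_and,
      Equiv.Perm.mul_apply]
    intro j hj
    by_cases hji : j = i
    · subst hji
      simpa using h2
    · have hjS : j ∉ insert i S := by simp [hji, hj]
      rw [Equiv.swap_apply_of_ne_of_ne hji (fun h => hjS (h ▸ h1))]
      exact hσ' j hjS
  · intro σ _ τ _ h
    obtain ⟨h1, h2⟩ := Prod.mk.inj h
    rw [h1] at h2
    exact mul_right_cancel h2

lemma card_permsPreservingOff_le {α κ : Type*} [Fintype α] [DecidableEq α] [DecidableEq κ]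
    (f : α → κ) (S : Finset α) :
    (permsPreservingOff f S).card ≤ S.card.factorial * (permsPreservingOff f ∅).card := by
  induction S using Finset.induction_on with
  | empty => simp
  | insert i S hi ih =>
    rw [Finset.card_insert_of_notMem hi, Nat.factorial_succ, mul_assoc]
    exact (card_permsPreservingOff_insert_le f S i hi).trans (Nat.mul_le_mul_left _ ih)

lemma card_fiber_modNat (b n : ℕ) (k : Fin n) :
    Fintype.card {i : Fin (b * n) // i.modNat = k} = b := by
  rw [Fintype.card_congr (finProdFinEquiv.symm.subtypeEquiv
    (q := fun p : Fin b × Fin n => p.2 = k) (by intro a; rfl))]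
  rw [Fintype.card_congr (β := Fin b)
    ⟨fun p => p.1.1, fun x => ⟨(x, k), rfl⟩, by rintro ⟨⟨x, y⟩, rfl⟩; rfl, fun _ => rfl⟩]
  simp

lemma card_permsPreservingOff_empty (b n : ℕ) :
    (permsPreservingOff (Fin.modNat : Fin (b * n) → Fin n) ∅).card = b.factorial ^ n := by
  have h := DomMulAct.stabilizer_card (Fin.modNat : Fin (b * n) → Fin n)
  simp only [card_fiber_modNat, Finset.prod_const, Finset.card_univ, Fintype.card_fin] at h
  rw [← h, Fintype.card_subtype]
  congr 1
  ext σ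
  simp [permsPreservingOff, funext_iff]

/-- The empty set of columns contributes `T ∅ = |permsPreservingOff f ∅|` to the permanent, and the
nonempty sets contribute at least `-∑ ε ^ |S| * T S`. Adding the `S = ∅` term to this sum, so that
it runs over all `S`, accounts for the factor `2`. -/
lemma permanent_add_ge {α κ : Type*} [Fintype α] [DecidableEq α] [DecidableEq κ]
    (f : α → κ) (I E : Matrix α α ℝ) (ε : ℝ) (hε : 0 ≤ ε)
    (hI : ∀ i j, I i j = if f i = f j then 1 else 0) (hE : ∀ i j, |E i j| ≤ 1) :
    2 * ((permsPreservingOff f ∅).card : ℝ) -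
        ∑ S : Finset α, ε ^ S.card * ((permsPreservingOff f S).card : ℝ) ≤
      (I + ε • E).permanent := by
  -- The contribution of the set `S` to the permanent.
  let F : Finset α → ℝ := fun S =>
    ∑ σ : Equiv.Perm α, (∏ i ∈ S, ε * E (σ i) i) * ∏ i ∈ Finset.univ \ S, I (σ i) i
  have hprod : ∀ (S : Finset α) (σ : Equiv.Perm α), ∏ i ∈ Finset.univ \ S, I (σ i) i =
      if σ ∈ permsPreservingOff f S then 1 else 0 := by
    intro S σ
    simp only [hI, Finset.prod_ite_zero, Finset.prod_const_one]
    simp [permsPreservingOff]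
  have hperm : (I + ε • E).permanent = ∑ S : Finset α, F S := by
    simp only [Matrix.permanent, F]
    rw [Finset.sum_comm]
    refine Finset.sum_congr rfl fun σ _ => ?_
    simp only [Matrix.add_apply, Matrix.smul_apply, smul_eq_mul, add_comm (I _ _)]
    rw [Finset.prod_add, Finset.powerset_univ]
  have hempty : F ∅ = (permsPreservingOff f ∅).card := by
    simp only [F, hprod]
    simp
  have hF : ∀ S, -(ε ^ S.card * ((permsPreservingOff f S).card : ℝ)) ≤ F S := by
    intro S
    refine (abs_le.1 ?_).1
    calc |F S| ≤ ∑ σ : Equiv.Perm α,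
          |(∏ i ∈ S, ε * E (σ i) i) * ∏ i ∈ Finset.univ \ S, I (σ i) i| :=
          Finset.abs_sum_le_sum_abs _ _
      _ ≤ ∑ σ : Equiv.Perm α, ε ^ S.card * (if σ ∈ permsPreservingOff f S then 1 else 0) := by
          refine Finset.sum_le_sum fun σ _ => ?_
          rw [hprod, abs_mul, Finset.abs_prod]
          refine mul_le_mul ?_ (by split_ifs <;> simp) (abs_nonneg _) (by positivity)
          rw [← Finset.prod_const]
          refine Finset.prod_le_prod (fun _ _ => abs_nonneg _) fun i _ => ?_
          rw [abs_mul, abs_of_nonneg hε]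
          exact mul_le_of_le_one_right hε (hE _ _)
      _ = _ := by
          rw [← Finset.mul_sum]
          simp
  rw [hperm, ← Finset.add_sum_erase _ _ (Finset.mem_univ ∅),
    ← Finset.add_sum_erase _ F (Finset.mem_univ ∅), hempty]
  have := Finset.sum_le_sum fun S (_ : S ∈ Finset.univ.erase (∅ : Finset α)) => hF S
  rw [Finset.sum_neg_distrib] at this
  simp only [Finset.card_empty, pow_zero, one_mul]
  linarith


/-- Let `b, n` be positive integers and `ε ≥ 0` with `ε·b·n < 1`.  Let `I` be the
`bn × bn` real matrix whose `(i,j)` entry is `1` if `i ≡ j (mod n)` and `0` otherwise,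
and let `E` be any `bn × bn` real matrix with all entries of absolute value at most `1`.
Then `perm (I + ε·E) ≥ (b!)^n · (1 − εbn/(1 − εbn))`. -/
theorem permanent_perturbed_block_identity_ge
    (b n : ℕ) (hb : 0 < b) (hn : 0 < n) (ε : ℝ) (hε : 0 ≤ ε)
    (hεbn : ε * b * n < 1)
    (I E : Matrix (Fin (b * n)) (Fin (b * n)) ℝ)
    (hI : ∀ i j, I i j = if (i : ℕ) % n = (j : ℕ) % n then 1 else 0)
    (hE : ∀ i j, |E i j| ≤ 1) :
    (I + ε • E).permanent ≥
      (b.factorial : ℝ) ^ n * (1 - ε * b * n / (1 - ε * b * n)) := by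
  set f : Fin (b * n) → Fin n := Fin.modNat with hf
  have hI' : ∀ i j, I i j = if f i = f j then 1 else 0 := by
    intro i j
    simp [hI, hf, Fin.ext_iff]
  have key := permanent_add_ge f I E ε hε hI' hE
  have hcount : ∀ S, ((permsPreservingOff f S).card : ℝ) ≤
      (S.card.factorial : ℝ) * (b.factorial : ℝ) ^ n := by
    intro S
    have := card_permsPreservingOff_le f S
    rw [hf, card_permsPreservingOff_empty] at this
    exact_mod_cast this
  have hx0 : 0 ≤ ε * b * n := by positivity
  have hsum : ∑ S : Finset (Fin (b * n)), ε ^ S.card * ((permsPreservingOff f S).card : ℝ) ≤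
      (b.factorial : ℝ) ^ n * (1 - ε * b * n)⁻¹ := by
    calc _ ≤ ∑ S : Finset (Fin (b * n)),
          ε ^ S.card * ((S.card.factorial : ℝ) * (b.factorial : ℝ) ^ n) :=
          Finset.sum_le_sum fun S _ => mul_le_mul_of_nonneg_left (hcount S) (by positivity)
      _ = ∑ k ∈ Finset.range (b * n + 1),
          (b.factorial : ℝ) ^ n * (ε ^ k * ((b * n).descFactorial k : ℝ)) := by
          rw [← Finset.powerset_univ, Finset.sum_powerset_apply_card
            (fun k => ε ^ k * ((k.factorial : ℝ) * (b.factorial : ℝ) ^ n))]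
          rw [Finset.card_univ, Fintype.card_fin]
          refine Finset.sum_congr rfl fun k _ => ?_
          rw [Nat.descFactorial_eq_factorial_mul_choose, nsmul_eq_mul]
          push_cast
          ring
      _ ≤ ∑ k ∈ Finset.range (b * n + 1), (b.factorial : ℝ) ^ n * (ε * b * n) ^ k := by
          refine Finset.sum_le_sum fun k _ => mul_le_mul_of_nonneg_left ?_ (by positivity)
          have h : ((b * n).descFactorial k : ℝ) ≤ ((b : ℝ) * n) ^ k := by
            exact_mod_cast Nat.descFactorial_le_pow (b * n) k
          rw [mul_assoc ε, mul_pow ε]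
          exact mul_le_mul_of_nonneg_left h (by positivity)
      _ ≤ _ := by
          rw [← Finset.mul_sum, ← tsum_geometric_of_lt_one hx0 hεbn]
          exact mul_le_mul_of_nonneg_left
            ((summable_geometric_of_lt_one hx0 hεbn).sum_le_tsum _ fun _ _ => by positivity)
            (by positivity)
  have hid : (b.factorial : ℝ) ^ n * (1 - ε * b * n / (1 - ε * b * n)) =
      2 * (b.factorial : ℝ) ^ n - (b.factorial : ℝ) ^ n * (1 - ε * b * n)⁻¹ := by
    have : 1 - ε * b * n ≠ 0 := by linarith
    field_simp
    ring
  have h0 : ((permsPreservingOff f ∅).card : ℝ) = (b.factorial : ℝ) ^ n := by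
    exact_mod_cast card_permsPreservingOff_empty b n
  rw [h0] at key
  rw [ge_iff_le, hid]
  linarith
end

section
/- Let D be an n×n real diagonal matrix whose diagonal entries are positive integers, and let O be an n×n complex unitary matrix. Then there exists an n×n complex unitary matrix V with V·D = D·V such that ‖O − V‖ ≤ 2n·‖O·D − D·O‖. -/
/-!
Write `c = ‖O D - D O‖` and let `P` be the block-diagonal part of `O`, i.e. the entries `O i j` with
`D i i = D j j`. Where the entries of `D` differ, they differ by at least `1`, so every entry of
`O - P` is bounded by the corresponding entry of `O D - D O`, hence by `c`; therefore
`‖O - P‖ ≤ δ` with `δ = n c` (`l2_norm_le_of_entries`).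

If `δ ≥ 1`, then `V = 1` works because `‖O - 1‖ ≤ 2`. Otherwise `P` is `δ`-close to an isometry, so
all its singular values lie in `[1 - δ, 1 + δ]` (`sqrt_spectrum_near_one`); in particular `P` is
invertible, and the unitary factor `V = P (P* P)^(-1/2)` of its polar decomposition satisfies
`‖P - V‖ ≤ δ` (`exists_polar_near`). It commutes with `D` since `P` and `P*` do. The triangle
inequality gives `‖O - V‖ ≤ 2 δ`.
-/

/-- The operator norm of a matrix induced by the Euclidean (ℓ²) vector norms,
i.e. the largest singular value. -/
noncomputable def l2OpNorm {𝕜 : Type*} [RCLike 𝕜] {m n : Type*} [Fintype m] [Fintype n]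
    [DecidableEq n] (M : Matrix m n 𝕜) : ℝ :=
  ‖LinearMap.toContinuousLinearMap (Matrix.toEuclideanLin M)‖

open scoped Matrix.Norms.L2Operator in
theorem l2OpNorm_eq_norm {n : ℕ} (M : Matrix (Fin n) (Fin n) ℂ) : l2OpNorm M = ‖M‖ := rfl

theorem norm_le_one_of_star_mul_self {E : Type*} [CStarAlgebra E] {v : E} (hv : star v * v = 1) :
    ‖v‖ ≤ 1 := by
  have h : ‖v‖ * ‖v‖ ≤ 1 := by
    rw [← CStarRing.norm_star_mul_self, hv]
    rcases subsingleton_or_nontrivial E with h | h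
    · simp [Subsingleton.elim (1 : E) 0]
    · simp
  nlinarith [norm_nonneg v]

/-- If the singular values of `a` (square roots of the spectrum of `a* a`) are within `δ < 1` of
`1`, the isometric factor of the polar decomposition of `a` is within `δ` of `a`, and it commutes
with everything that commutes with `a` and `a*`. -/
theorem exists_polar_near {E : Type*} [CStarAlgebra E] (a d : E) (δ : ℝ) (h0 : 0 ≤ δ) (h1 : δ < 1)
    (hs : ∀ x ∈ spectrum ℝ (star a * a), |√x - 1| ≤ δ)
    (hd : Commute a d) (hd' : Commute (star a) d) :
    ∃ v : E, star v * v = 1 ∧ Commute v d ∧ ‖a - v‖ ≤ δ := by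
  have hA : IsSelfAdjoint (star a * a) := IsSelfAdjoint.star_mul_self a
  have hpos : ∀ x ∈ spectrum ℝ (star a * a), 0 < √x := fun x hx => by
    have := (abs_le.mp (hs x hx)).1
    linarith
  have hc : ContinuousOn (fun x : ℝ => (√x)⁻¹) (spectrum ℝ (star a * a)) :=
    Real.continuous_sqrt.continuousOn.inv₀ fun x hx => (hpos x hx).ne'
  have hc' : ContinuousOn (fun x : ℝ => √x) (spectrum ℝ (star a * a)) :=
    Real.continuous_sqrt.continuousOn
  set A := star a * a with hAdef
  set S := cfc (fun x : ℝ => (√x)⁻¹) A with hS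
  have hSsa : star S = S := (cfc_predicate (fun x : ℝ => (√x)⁻¹) A : IsSelfAdjoint _).star_eq
  have hSAS : S * A * S = 1 := by
    calc S * A * S = S * cfc (fun x : ℝ => x) A * S := by rw [cfc_id' ℝ A]
      _ = cfc (fun x : ℝ => (√x)⁻¹ * x * (√x)⁻¹) A := by
        rw [hS, ← cfc_mul (fun x : ℝ => (√x)⁻¹) (fun x : ℝ => x) A hc continuousOn_id,
          ← cfc_mul (fun x : ℝ => (√x)⁻¹ * x) (fun x : ℝ => (√x)⁻¹) A
            (hc.mul continuousOn_id) hc]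
      _ = cfc (fun _ : ℝ => (1 : ℝ)) A := by
        refine cfc_congr fun x hx => ?_
        have h := hpos x hx
        have h2 := Real.mul_self_sqrt (Real.sqrt_pos.mp h).le
        field_simp
        nlinarith
      _ = 1 := cfc_const_one ℝ A
  have hST : S * cfc (fun x : ℝ => √x) A = 1 := by
    rw [hS, ← cfc_mul _ _ A hc hc', ← cfc_const_one ℝ A]
    exact cfc_congr fun x hx => inv_mul_cancel₀ (hpos x hx).ne'
  have hV : star (a * S) * (a * S) = 1 := by
    rw [star_mul, hSsa, ← hSAS, hAdef]
    simp only [mul_assoc]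
  refine ⟨a * S, hV, hd.mul_left ((hd'.mul_left hd).cfc_real _), ?_⟩
  have hdiff : a - a * S = (a * S) * cfc (fun x : ℝ => √x - 1) A := by
    rw [cfc_sub (fun x : ℝ => √x) (fun _ => 1) A hc' continuousOn_const, cfc_const_one ℝ A,
      mul_sub, mul_assoc, hST, mul_one, mul_one]
  rw [hdiff]
  calc _ ≤ ‖a * S‖ * ‖cfc (fun x : ℝ => √x - 1) A‖ := norm_mul_le _ _
    _ ≤ 1 * δ := mul_le_mul (norm_le_one_of_star_mul_self hV)
        (norm_cfc_le h0 fun x hx => hs x hx) (norm_nonneg _) zero_le_one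
    _ = δ := one_mul δ

section
open scoped Matrix.Norms.L2Operator

theorem norm_entry_le_l2_norm {n : ℕ} (M : Matrix (Fin n) (Fin n) ℂ) (i j : Fin n) :
    ‖M i j‖ ≤ ‖M‖ := by
  have h := M.l2_opNorm_mulVec (EuclideanSpace.single j (1 : ℂ))
  rw [PiLp.norm_single, norm_one, mul_one] at h
  refine le_trans ?_ ((PiLp.norm_apply_le _ i).trans h)
  simp

theorem l2_norm_le_of_entries {n : ℕ} (M : Matrix (Fin n) (Fin n) ℂ) (c : ℝ) (hc : 0 ≤ c)
    (h : ∀ i j, ‖M i j‖ ≤ c) : ‖M‖ ≤ n * c := by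
  rw [Matrix.cstar_norm_def]
  refine ContinuousLinearMap.opNorm_le_bound _ (by positivity) fun x => ?_
  refine abs_le_of_sq_le_sq' ?_ (by positivity) |>.2
  rw [EuclideanSpace.norm_sq_eq]
  have hrow : ∀ i, ‖(Matrix.toEuclideanCLM (n := Fin n) (𝕜 := ℂ) M x) i‖ ^ 2
      ≤ c ^ 2 * (n * ‖x‖ ^ 2) := by
    intro i
    have h1 : ‖(Matrix.toEuclideanCLM (n := Fin n) (𝕜 := ℂ) M x) i‖ ≤ c * ∑ j, ‖x j‖ := by
      rw [Matrix.ofLp_toEuclideanCLM, Matrix.mulVec, dotProduct, Finset.mul_sum]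
      refine (norm_sum_le _ _).trans (Finset.sum_le_sum fun j _ => ?_)
      rw [norm_mul]
      exact mul_le_mul_of_nonneg_right (h i j) (norm_nonneg _)
    have h2 : (∑ j, ‖x j‖) ^ 2 ≤ n * ‖x‖ ^ 2 := by
      rw [EuclideanSpace.norm_sq_eq]
      simpa using sq_sum_le_card_mul_sum_sq (s := Finset.univ) (f := fun j => ‖x j‖)
    calc _ ≤ (c * ∑ j, ‖x j‖) ^ 2 := by gcongr
      _ = c ^ 2 * (∑ j, ‖x j‖) ^ 2 := by ring
      _ ≤ _ := by gcongr
  calc _ ≤ ∑ _i : Fin n, c ^ 2 * (n * ‖x‖ ^ 2) := Finset.sum_le_sum fun i _ => hrow i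
    _ = _ := by simp; ring

/-- An eigenvector of `P* P` realizes the corresponding singular value of `P`, and `P` changes its
norm by a relative amount of at most `‖O - P‖` because `O` preserves it. -/
theorem sqrt_spectrum_near_one {n : ℕ} (O P : Matrix (Fin n) (Fin n) ℂ) (hO : star O * O = 1)
    (x : ℝ) (hx : x ∈ spectrum ℝ (star P * P)) : |√x - 1| ≤ ‖O - P‖ := by
  rw [spectrum.mem_iff, Matrix.isUnit_iff_isUnit_det, isUnit_iff_ne_zero, not_not,
    ← Matrix.exists_mulVec_eq_zero_iff] at hx
  obtain ⟨v, hv, hv0⟩ := hx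
  have hvA : (star P * P).mulVec v = (x : ℂ) • v := by
    rw [Matrix.sub_mulVec, sub_eq_zero, Algebra.algebraMap_eq_smul_one, Matrix.smul_mulVec,
      Matrix.one_mulVec] at hv0
    rw [← hv0]
    ext i
    simp
  set T := Matrix.toEuclideanCLM (n := Fin n) (𝕜 := ℂ) with hT
  set w : EuclideanSpace ℂ (Fin n) := WithLp.toLp 2 v with hw
  have hw0 : 0 < ‖w‖ := by
    rw [norm_pos_iff]
    intro h
    exact hv (by simpa [hw] using h)
  have key : ∀ (M : Matrix (Fin n) (Fin n) ℂ) (y : ℝ), T (star M * M) w = (y : ℂ) • w →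
      ‖T M w‖ ^ 2 = y * ‖w‖ ^ 2 := by
    intro M y hM
    have h := (T M).apply_norm_sq_eq_inner_adjoint_left w
    have h2 : (ContinuousLinearMap.adjoint (T M)) (T M w) = (y : ℂ) • w := by
      rw [← hM, map_mul, map_star]
      rfl
    rw [ContinuousLinearMap.comp_apply, h2, inner_smul_left, inner_self_eq_norm_sq_to_K] at h
    rw [h]
    simp [← Complex.ofReal_pow, ← Complex.ofReal_mul]
  have hP : ‖T P w‖ ^ 2 = x * ‖w‖ ^ 2 := by
    refine key P x ?_
    rw [hT, hw, Matrix.toEuclideanCLM_toLp, hvA]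
    rfl
  have hOw : ‖T O w‖ = ‖w‖ := by
    have h := key O 1 (by rw [hO, map_one]; simp)
    rw [one_mul] at h
    exact (sq_eq_sq₀ (norm_nonneg _) (norm_nonneg _)).mp h
  have hPw : ‖T P w‖ = √x * ‖w‖ := by
    rw [← Real.sqrt_sq (norm_nonneg (T P w)), hP, Real.sqrt_mul' _ (sq_nonneg _),
      Real.sqrt_sq hw0.le]
  have hle : |(√x - 1) * ‖w‖| ≤ ‖O - P‖ * ‖w‖ := by
    calc |(√x - 1) * ‖w‖| = |‖T P w‖ - ‖T O w‖| := by rw [hPw, hOw]; ring_nf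
      _ ≤ ‖T P w - T O w‖ := abs_norm_sub_norm_le _ _
      _ = ‖T (O - P) w‖ := by rw [norm_sub_rev, map_sub]; rfl
      _ ≤ ‖O - P‖ * ‖w‖ := (T (O - P)).le_opNorm w
  rw [abs_mul, abs_of_pos hw0] at hle
  exact le_of_mul_le_mul_right hle hw0

end

open scoped Matrix.Norms.L2Operator in
/-- Let `D` be an `n × n` real diagonal matrix whose diagonal entries are positive
integers, and let `O` be an `n × n` complex unitary matrix.  Then there exists an
`n × n` complex unitary matrix `V` commuting with `D` such that
`‖O − V‖ ≤ 2n·‖O·D − D·O‖`. -/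
theorem exists_commuting_unitary_close
    (n : ℕ) (D : Matrix (Fin n) (Fin n) ℝ) (hD : D.IsDiag)
    (hDpos : ∀ i, ∃ k : ℕ, 0 < k ∧ D i i = (k : ℝ))
    (O : Matrix (Fin n) (Fin n) ℂ) (hO : O ∈ Matrix.unitaryGroup (Fin n) ℂ) :
    ∃ V ∈ Matrix.unitaryGroup (Fin n) ℂ,
      V * D.map Complex.ofReal = D.map Complex.ofReal * V ∧
      l2OpNorm (O - V) ≤
        2 * n * l2OpNorm (O * D.map Complex.ofReal - D.map Complex.ofReal * O) := by
  simp only [l2OpNorm_eq_norm]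
  choose k _ hk using hDpos
  have hDd : D.map Complex.ofReal = Matrix.diagonal fun i => (k i : ℂ) := by
    ext i j
    rcases eq_or_ne i j with rfl | hij
    · simp [hk]
    · simp [hD hij, hij]
  rw [hDd]
  set Δ : Matrix (Fin n) (Fin n) ℂ := Matrix.diagonal fun i => (k i : ℂ) with hΔ
  set c := ‖O * Δ - Δ * O‖ with hc
  have hc0 : 0 ≤ c := norm_nonneg _
  have hO' : star O * O = 1 := Matrix.mem_unitaryGroup_iff'.mp hO
  rcases le_or_gt 1 (n * c) with hbig | hsmall
  · refine ⟨1, one_mem _, by simp, ?_⟩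
    have h1 : ‖O - 1‖ ≤ 1 + 1 := (norm_sub_le _ _).trans (add_le_add
      (norm_le_one_of_star_mul_self hO') (norm_le_one_of_star_mul_self (by simp)))
    linarith
  · let P : Matrix (Fin n) (Fin n) ℂ := Matrix.of fun i j => if k i = k j then O i j else 0
    have hPD : Commute P Δ := by
      ext i j
      simp only [hΔ, Matrix.mul_diagonal, Matrix.diagonal_mul, P, Matrix.of_apply]
      split_ifs with h
      · rw [h, mul_comm]
      · simp
    have hΔs : star Δ = Δ := by
      rw [hΔ, Matrix.star_eq_conjTranspose, Matrix.diagonal_conjTranspose]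
      congr 1
      ext i
      simp
    have hPD' : Commute (star P) Δ := by
      rw [← hΔs]
      exact hPD.star_star
    have hOP : ‖O - P‖ ≤ n * c := by
      refine l2_norm_le_of_entries _ c hc0 fun i j => ?_
      by_cases h : k i = k j
      · simpa [P, h] using hc0
      · refine le_trans ?_ (norm_entry_le_l2_norm _ i j)
        have he : (O * Δ - Δ * O) i j = (((k j : ℤ) - (k i : ℤ) : ℤ) : ℂ) * O i j := by
          simp only [hΔ, Matrix.sub_apply, Matrix.mul_diagonal, Matrix.diagonal_mul]
          push_cast
          ring
        rw [he, norm_mul]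
        -- distinct integers are at distance at least one
        have hge : (1 : ℝ) ≤ ‖(((k j : ℤ) - (k i : ℤ) : ℤ) : ℂ)‖ := by
          rw [Complex.norm_intCast]
          exact_mod_cast Int.one_le_abs (show (k j : ℤ) - (k i : ℤ) ≠ 0 by omega)
        simpa [P, h] using le_mul_of_one_le_left (norm_nonneg (O i j)) hge
    obtain ⟨V, hV, hVD, hPV⟩ := exists_polar_near P Δ (n * c) (by positivity) hsmall
      (fun x hx => (sqrt_spectrum_near_one O P hO' x hx).trans hOP) hPD hPD'
    refine ⟨V, Matrix.mem_unitaryGroup_iff'.mpr hV, hVD, ?_⟩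
    calc ‖O - V‖ ≤ ‖O - P‖ + ‖P - V‖ := norm_sub_le_norm_sub_add_norm_sub _ _ _
      _ ≤ 2 * n * c := by linarith
end

section
/- For every n×n complex matrix A there exists an n×n complex unitary matrix U such that ‖A − U‖ ≤ √(‖A*A − I‖). -/
/-!
Diagonalise `T† T` in an orthonormal basis `v`. The vectors `T (v i)` are pairwise orthogonal, so
the normalised nonzero ones extend to an orthonormal basis `w` with `T (v i) = σ i • w i`, where
`σ i = ‖T (v i)‖` (a singular value decomposition). The unitary `U` sends `v i` to `w i`. Then
`(T - U) (v i) = (σ i - 1) • w i`, and Pythagoras reduces the bound to the scalar inequality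
`(s - 1) ^ 2 ≤ |s ^ 2 - 1|` for `s ≥ 0`, together with `|σ i ^ 2 - 1| ≤ ‖T† T - 1‖`.
-/

open Matrix
open scoped InnerProductSpace

/-- Singular value decomposition of an endomorphism, with singular values written `‖T (v i)‖`:
the right singular vectors `v` diagonalise `T† T`, and `w` are the left singular vectors. -/
theorem exists_singular_bases {E : Type*} [NormedAddCommGroup E] [InnerProductSpace ℂ E]
    [FiniteDimensional ℂ E] [CompleteSpace E] (T : E →L[ℂ] E) :
    ∃ v w : OrthonormalBasis (Fin (Module.finrank ℂ E)) ℂ E,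
      (∀ i, T (v i) = (‖T (v i)‖ : ℂ) • w i) ∧
      (∀ i, (star T * T) (v i) = ((‖T (v i)‖ ^ 2 : ℝ) : ℂ) • v i) := by
  have hsym : ((star T * T : E →L[ℂ] E) : E →ₗ[ℂ] E).IsSymmetric :=
    (IsSelfAdjoint.star_mul_self T).isSymmetric
  set v := hsym.eigenvectorBasis rfl with hv
  have heig : ∀ i, (star T * T) (v i) = ((hsym.eigenvalues rfl i : ℝ) : ℂ) • v i :=
    fun i => hsym.apply_eigenvectorBasis rfl i
  have hinner : ∀ i j, ⟪T (v i), T (v j)⟫_ℂ =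
      ((hsym.eigenvalues rfl j : ℝ) : ℂ) * ⟪v i, v j⟫_ℂ := by
    intro i j
    rw [← inner_smul_right, ← heig, mul_apply_eq_comp,
      ContinuousLinearMap.star_eq_adjoint, ContinuousLinearMap.adjoint_inner_right]
  have horth : ∀ i j, i ≠ j → ⟪T (v i), T (v j)⟫_ℂ = 0 := by
    intro i j hij
    rw [hinner, v.orthonormal.2 hij, mul_zero]
  have hlam : ∀ i, ((hsym.eigenvalues rfl i : ℝ) : ℂ) = ((‖T (v i)‖ ^ 2 : ℝ) : ℂ) := by
    intro i
    have h := hinner i i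
    rw [inner_self_eq_norm_sq_to_K, inner_self_eq_norm_sq_to_K, v.orthonormal.1 i] at h
    simpa using h.symm
  -- Only the nonzero images can be normalised; on the kernel `w` is an arbitrary completion.
  have hon : Orthonormal ℂ (({i | T (v i) ≠ 0} : Set (Fin (Module.finrank ℂ E))).domRestrict
      fun i => ((‖T (v i)‖ : ℂ)⁻¹) • T (v i)) := by
    refine ⟨fun i => ?_, fun i j hij => ?_⟩
    · have := norm_ne_zero_iff.2 i.2
      simp [norm_smul, this]
    · have := horth i j (fun h => hij (Subtype.ext h))
      simp [inner_smul_left, inner_smul_right, this]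
  obtain ⟨w, hw⟩ := hon.exists_orthonormalBasis_extension_of_card_eq (by simp)
  refine ⟨v, w, fun i => ?_, fun i => by rw [heig, hlam]⟩
  by_cases h : T (v i) = 0
  · simp [h]
  · rw [hw i h, smul_inv_smul₀ (by simpa using h)]

/-- Coordinate-free form of the bound, with `U` the unitary sending right singular vectors to left
singular vectors. -/
theorem exists_unitary_operator_close {E : Type*} [NormedAddCommGroup E] [InnerProductSpace ℂ E]
    [FiniteDimensional ℂ E] [CompleteSpace E] (T : E →L[ℂ] E) :
    ∃ U ∈ unitary (E →L[ℂ] E), ‖T - U‖ ≤ Real.sqrt ‖star T * T - 1‖ := by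
  obtain ⟨v, w, hT, hTT⟩ := exists_singular_bases T
  set L : E ≃ₗᵢ[ℂ] E := v.equiv w (Equiv.refl _) with hL
  have hLv : ∀ i, L (v i) = w i := fun i => by simp [hL]
  obtain ⟨U, hU, hUL⟩ : ∃ U ∈ unitary (E →L[ℂ] E), ∀ x, U x = L x :=
    ⟨_, (Unitary.linearIsometryEquiv.symm L).property, fun _ => rfl⟩
  refine ⟨U, hU, ?_⟩
  have hUv : ∀ i, U (v i) = w i := fun i => (hUL _).trans (hLv i)
  have hdiff : ∀ i, (T - U) (v i) = ((‖T (v i)‖ - 1 : ℝ) : ℂ) • w i := by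
    intro i
    rw [_root_.sub_apply, hUv]
    conv_lhs => rw [hT i]
    push_cast
    rw [sub_smul, one_smul]
  have hbound : ∀ i, |‖T (v i)‖ ^ 2 - 1| ≤ ‖star T * T - 1‖ := by
    intro i
    have h := (star T * T - 1).le_opNorm (v i)
    have e : (star T * T - 1) (v i) = ((‖T (v i)‖ ^ 2 - 1 : ℝ) : ℂ) • v i := by
      rw [_root_.sub_apply, hTT]
      push_cast
      rw [sub_smul, one_smul]
      rfl
    rwa [e, norm_smul, v.orthonormal.1 i, mul_one, mul_one, Complex.norm_real,
      Real.norm_eq_abs] at h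
  have hscalar : ∀ i, (‖T (v i)‖ - 1) ^ 2 ≤ ‖star T * T - 1‖ := by
    intro i
    refine le_trans ?_ (hbound i)
    have h0 := norm_nonneg (T (v i))
    rcases le_total 1 ‖T (v i)‖ with h | h
    · exact le_trans (by nlinarith) (le_abs_self _)
    · exact le_trans (by nlinarith) (neg_le_abs _)
  refine ContinuousLinearMap.opNorm_le_bound _ (Real.sqrt_nonneg _) fun x => ?_
  have hx : (T - U) x = ∑ i, (v.repr x i * ((‖T (v i)‖ - 1 : ℝ) : ℂ)) • w i := by
    conv_lhs => rw [← v.sum_repr x]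
    simp only [map_sum, map_smul, hdiff, smul_smul]
  have hcoord : ∀ i, w.repr ((T - U) x) i = v.repr x i * ((‖T (v i)‖ - 1 : ℝ) : ℂ) := by
    intro i
    rw [hx, w.repr_apply_apply, w.orthonormal.inner_right_fintype]
  refine le_of_sq_le_sq ?_ (by positivity)
  rw [mul_pow, Real.sq_sqrt (norm_nonneg _), ← w.repr.norm_map, ← v.repr.norm_map x,
    EuclideanSpace.norm_sq_eq, EuclideanSpace.norm_sq_eq, Finset.mul_sum]
  refine Finset.sum_le_sum fun i _ => ?_
  rw [hcoord, norm_mul, mul_pow, Complex.norm_real, Real.norm_eq_abs, sq_abs, mul_comm]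
  exact mul_le_mul_of_nonneg_right (hscalar i) (sq_nonneg _)

/-- For every `n × n` complex matrix `A` there exists an `n × n` complex unitary
matrix `U` such that `‖A − U‖ ≤ √(‖A*A − I‖)`. -/
theorem exists_unitary_close_of_near_isometry
    (n : ℕ) (A : Matrix (Fin n) (Fin n) ℂ) :
    ∃ U ∈ Matrix.unitaryGroup (Fin n) ℂ,
      l2OpNorm (A - U) ≤ Real.sqrt (l2OpNorm (Aᴴ * A - 1)) := by
  have hnorm : ∀ M : Matrix (Fin n) (Fin n) ℂ,
      l2OpNorm M = ‖Matrix.toEuclideanCLM (n := Fin n) (𝕜 := ℂ) M‖ := fun M => rfl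
  obtain ⟨U, hU, h⟩ :=
    exists_unitary_operator_close (Matrix.toEuclideanCLM (n := Fin n) (𝕜 := ℂ) A)
  obtain ⟨B, rfl⟩ :=
    EquivLike.surjective (Matrix.toEuclideanCLM (n := Fin n) (𝕜 := ℂ)) U
  refine ⟨B, ?_, ?_⟩
  · rw [Matrix.mem_unitaryGroup_iff']
    apply EquivLike.injective (Matrix.toEuclideanCLM (n := Fin n) (𝕜 := ℂ))
    rw [map_mul, map_star, map_one]
    exact (Unitary.mem_iff.1 hU).1
  rw [hnorm, hnorm, map_sub, map_sub, map_mul, map_one, ← Matrix.star_eq_conjTranspose, map_star]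
  exact h
end

section
/- Let A be a 2n×2n real symplectic matrix, i.e. A ∈ Sp(2n, ℝ). Then there exists a matrix O ∈ Sp(2n, ℝ) ∩ O(2n) (a symplectic orthogonal matrix) such that ‖A − O‖ ≤ √(‖AᵀA − I‖). -/
/-!
The orthogonal matrix is the orthogonal factor of the polar decomposition `A = O P`,
`P = √(AᵀA)`.

`P` is itself symplectic: writing `Ω` for the symplectic form, the matrix `Ωᵀ P⁻¹ Ω` is positive
semidefinite and squares to `Ωᵀ (AᵀA)⁻¹ Ω`, which equals `AᵀA` because `AᵀA` is symplectic. By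
uniqueness of the positive square root `Ωᵀ P⁻¹ Ω = P`, i.e. `P Ω P = Ω`
(`sqrt_symplectic`). Hence `O = A P⁻¹` is symplectic as well.

For the norm, `‖A - O‖ = ‖O (P - 1)‖ = ‖P - 1‖`, and every `x ≥ 0` satisfies
`(x - 1)² ≤ |x² - 1|`; applied on the spectrum of `P` this gives `‖P - 1‖ ≤ √‖P² - 1‖`
(`norm_sub_one_le_sqrt`).
-/

open Matrix

/-- The standard symplectic form `Ω = [[0, Iₙ], [−Iₙ, 0]]` on `ℝ^(2n)`. -/
def stdSymplecticForm (n : ℕ) : Matrix (Fin n ⊕ Fin n) (Fin n ⊕ Fin n) ℝ :=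
  Matrix.fromBlocks 0 1 (-1) 0

open scoped Matrix.Norms.L2Operator MatrixOrder

lemma l2OpNorm_eq_norm_s4 {m : Type*} [Fintype m] [DecidableEq m] (M : Matrix m m ℝ) :
    l2OpNorm M = ‖M‖ := rfl

lemma norm_sub_one_le_sqrt {m : Type*} [Fintype m] [DecidableEq m] {P : Matrix m m ℝ}
    (hP : 0 ≤ P) : ‖P - 1‖ ≤ Real.sqrt ‖P * P - 1‖ := by
  have hsa : IsSelfAdjoint P := IsSelfAdjoint.of_nonneg hP
  have h1 : cfc (fun x : ℝ => x - 1) P = P - 1 := by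
    rw [cfc_sub (fun x : ℝ => x) (fun _ => 1) P, cfc_id' ℝ P, cfc_const_one ℝ P]
  have h2 : cfc (fun x : ℝ => x * x - 1) P = P * P - 1 := by
    rw [cfc_sub (fun x : ℝ => x * x) (fun _ => 1) P, cfc_mul (fun x : ℝ => x) (fun x => x) P,
      cfc_id' ℝ P, cfc_const_one ℝ P]
  rw [← h1, ← h2]
  refine norm_cfc_le (Real.sqrt_nonneg _) fun x hx => ?_
  have hx0 : 0 ≤ x := spectrum_nonneg_of_nonneg hP hx
  refine Real.le_sqrt_of_sq_le (le_trans ?_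
    (norm_apply_le_norm_cfc (fun x : ℝ => x * x - 1) P hx))
  rw [Real.norm_eq_abs, Real.norm_eq_abs, show x * x - 1 = (x - 1) * (x + 1) by ring, abs_mul,
    sq, abs_of_nonneg (show 0 ≤ x + 1 by linarith)]
  exact mul_le_mul_of_nonneg_left (abs_le.mpr ⟨by linarith, by linarith⟩) (abs_nonneg _)

lemma stdSymplecticForm_transpose (n : ℕ) :
    (stdSymplecticForm n)ᵀ = -stdSymplecticForm n := by
  simp [stdSymplecticForm, Matrix.fromBlocks_transpose, Matrix.fromBlocks_neg]

lemma stdSymplecticForm_mul_self (n : ℕ) :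
    stdSymplecticForm n * stdSymplecticForm n = -1 := by
  simp [stdSymplecticForm, Matrix.fromBlocks_multiply, ← Matrix.fromBlocks_one,
    Matrix.fromBlocks_neg]

/-- If the square of an invertible positive semidefinite matrix is symplectic, then so is the
matrix itself. -/
lemma sqrt_symplectic {n : ℕ} {P : Matrix (Fin n ⊕ Fin n) (Fin n ⊕ Fin n) ℝ} (hP : 0 ≤ P)
    (hu : IsUnit P.det)
    (h : (P * P) * stdSymplecticForm n * (P * P) = stdSymplecticForm n) :
    P * stdSymplecticForm n * P = stdSymplecticForm n := by
  set W := stdSymplecticForm n with hW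
  have hWW : W * W = -1 := stdSymplecticForm_mul_self n
  have hWT : Wᵀ = -W := stdSymplecticForm_transpose n
  have hl := Matrix.nonsing_inv_mul P hu
  have hr := Matrix.mul_nonsing_inv P hu
  set R := P⁻¹ with hR
  have hQ : 0 ≤ Wᵀ * R * W := by
    rw [Matrix.nonneg_iff_posSemidef] at hP ⊢
    simpa using hP.inv.conjTranspose_mul_mul_same W
  have hinv : R * R * W = W * (P * P) := by
    calc R * R * W = R * R * (P * P * W * (P * P)) := by rw [h]
      _ = R * (R * P) * P * W * (P * P) := by noncomm_ring
      _ = W * (P * P) := by rw [hl, mul_one, hl, one_mul]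
  have hQQ : (Wᵀ * R * W) * (Wᵀ * R * W) = P * P := by
    calc (Wᵀ * R * W) * (Wᵀ * R * W) = W * R * (W * W) * (R * W) := by rw [hWT]; noncomm_ring
      _ = -(W * (R * R * W)) := by rw [hWW]; noncomm_ring
      _ = -(W * W) * (P * P) := by rw [hinv]; noncomm_ring
      _ = P * P := by rw [hWW]; noncomm_ring
  have hQP : Wᵀ * R * W = P := by
    rw [← CFC.sqrt_unique hQQ hQ, CFC.sqrt_unique rfl hP]
  calc P * W * P = P * W * (Wᵀ * R * W) := by rw [hQP]
    _ = -(P * (W * W) * R * W) := by rw [hWT]; noncomm_ring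
    _ = P * R * W := by rw [hWW]; noncomm_ring
    _ = W := by rw [hr, one_mul]

/-- Let `A ∈ Sp(2n, ℝ)` be a real symplectic matrix.  Then there exists a symplectic
orthogonal matrix `O ∈ Sp(2n, ℝ) ∩ O(2n)` such that `‖A − O‖ ≤ √(‖AᵀA − I‖)`. -/
theorem symplectic_dist_to_orthogonal
    (n : ℕ) (A : Matrix (Fin n ⊕ Fin n) (Fin n ⊕ Fin n) ℝ)
    (hA : Aᵀ * stdSymplecticForm n * A = stdSymplecticForm n) :
    ∃ O : Matrix (Fin n ⊕ Fin n) (Fin n ⊕ Fin n) ℝ,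
      Oᵀ * stdSymplecticForm n * O = stdSymplecticForm n ∧ Oᵀ * O = 1 ∧
      l2OpNorm (A - O) ≤ Real.sqrt (l2OpNorm (Aᵀ * A - 1)) := by
  set W := stdSymplecticForm n with hW
  have hWW : W * W = -1 := stdSymplecticForm_mul_self n
  have hWT : Wᵀ = -W := stdSymplecticForm_transpose n
  -- `-W Aᵀ W` is a left inverse of `A`, hence a right inverse too.
  have hleft : (-(W * Aᵀ * W)) * A = 1 := by
    calc (-(W * Aᵀ * W)) * A = -(W * (Aᵀ * W * A)) := by noncomm_ring
      _ = 1 := by rw [hA, hWW, neg_neg]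
  have hright : A * (-(W * Aᵀ * W)) = 1 := mul_eq_one_comm.mp hleft
  have hA' : A * W * Aᵀ = W := by
    calc A * W * Aᵀ = -(A * W * Aᵀ * (W * W)) := by rw [hWW]; noncomm_ring
      _ = A * (-(W * Aᵀ * W)) * W := by noncomm_ring
      _ = W := by rw [hright, one_mul]
  have hB : 0 ≤ Aᵀ * A := by
    rw [Matrix.nonneg_iff_posSemidef]
    simpa using Matrix.posSemidef_conjTranspose_mul_self A
  obtain ⟨P, hP, hPP⟩ : ∃ P, 0 ≤ P ∧ P * P = Aᵀ * A :=
    ⟨CFC.sqrt (Aᵀ * A), CFC.sqrt_nonneg _, CFC.sqrt_mul_sqrt_self _ hB⟩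
  have hdetA : IsUnit A.det := (Matrix.isUnit_iff_isUnit_det A).mp (.of_mul_eq_one _ hright)
  have hu : IsUnit P.det := by
    have : IsUnit (P.det * P.det) := by
      rw [← Matrix.det_mul, hPP, Matrix.det_mul, Matrix.det_transpose]
      exact hdetA.mul hdetA
    exact isUnit_of_mul_isUnit_left this
  have hPT : Pᵀ = P := by
    simpa using (Matrix.nonneg_iff_posSemidef.mp hP).isHermitian.eq
  have hPW : P * W * P = W := by
    refine sqrt_symplectic hP hu ?_
    rw [hPP, ← hW]
    calc Aᵀ * A * W * (Aᵀ * A) = Aᵀ * (A * W * Aᵀ) * A := by noncomm_ring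
      _ = W := by rw [hA', hA]
  have hl := Matrix.nonsing_inv_mul P hu
  have hr := Matrix.mul_nonsing_inv P hu
  have hRT : (P⁻¹)ᵀ = P⁻¹ := by rw [Matrix.transpose_nonsing_inv, hPT]
  have hO : (A * P⁻¹)ᵀ * (A * P⁻¹) = 1 := by
    calc (A * P⁻¹)ᵀ * (A * P⁻¹) = P⁻¹ * (Aᵀ * A) * P⁻¹ := by
          rw [Matrix.transpose_mul, hRT]; noncomm_ring
      _ = (P⁻¹ * P) * (P * P⁻¹) := by rw [← hPP]; noncomm_ring
      _ = 1 := by rw [hl, hr, one_mul]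
  refine ⟨A * P⁻¹, ?_, hO, ?_⟩
  · calc (A * P⁻¹)ᵀ * W * (A * P⁻¹) = P⁻¹ * (Aᵀ * W * A) * P⁻¹ := by
          rw [Matrix.transpose_mul, hRT]; noncomm_ring
      _ = P⁻¹ * (P * W * P) * P⁻¹ := by rw [hA, hPW]
      _ = (P⁻¹ * P) * W * (P * P⁻¹) := by noncomm_ring
      _ = W := by rw [hl, hr, one_mul, mul_one]
  · have hmem : A * P⁻¹ ∈ unitary (Matrix (Fin n ⊕ Fin n) (Fin n ⊕ Fin n) ℝ) := by
      have : star (A * P⁻¹) * (A * P⁻¹) = 1 := by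
        rw [Matrix.star_eq_conjTranspose, Matrix.conjTranspose_eq_transpose_of_trivial, hO]
      exact Unitary.mem_iff.mpr ⟨this, mul_eq_one_comm.mp this⟩
    have hfac : A - A * P⁻¹ = A * P⁻¹ * (P - 1) := by
      rw [mul_sub, mul_assoc, hl, mul_one, mul_one]
    rw [l2OpNorm_eq_norm_s4, l2OpNorm_eq_norm_s4, hfac, CStarRing.norm_mem_unitary_mul _ hmem, ← hPP]
    exact norm_sub_one_le_sqrt hP
end

section
/- Let P be an n×n complex Hermitian matrix with P² = P (an orthogonal projection), let E be an n×n complex matrix with ‖E‖ ≤ 1, and let ε ≥ 0. Suppose w ∈ ℂⁿ is a unit vector and λ is a real number with λ ≥ 1 − ε/2 such that (P − (ε/2)·E)·w = λ·w. Then ‖w − P·w‖² ≤ 5ε²/4. -/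
/-!
Write `a = P w`, `b = w - P w`, `δ = ε / 2`. The eigenvalue equation rearranges to
`(1 - λ) a - λ b = δ E w`. Since `a ⟂ b`, Pythagoras gives
`(1 - λ)² ‖a‖² + λ² ‖b‖² = δ² ‖E w‖² ≤ δ²`, so `λ² ‖b‖² ≤ δ²`; also `‖b‖² ≤ ‖w‖² = 1`.
If `‖b‖² > 5 δ²`, then `δ² < 1/5`, hence `δ < 1/2` and `λ > 1/2`, which forces
`‖b‖² ≤ 4 δ²`, a contradiction.
-/

open Matrix

/-- Let `P` be an `n × n` complex orthogonal projection (Hermitian with `P² = P`),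
let `E` be an `n × n` complex matrix with `‖E‖ ≤ 1`, and let `ε ≥ 0`.  If `w ∈ ℂⁿ`
is a unit vector and `λ ≥ 1 − ε/2` is a real number with `(P − (ε/2)·E)·w = λ·w`,
then `‖w − P·w‖² ≤ 5ε²/4`. -/
theorem near_eigenvector_close_to_projection_range
    (n : ℕ) (P E : Matrix (Fin n) (Fin n) ℂ)
    (hP : P.IsHermitian) (hP2 : P * P = P) (hE : l2OpNorm E ≤ 1)
    (ε : ℝ) (hε : 0 ≤ ε)
    (w : EuclideanSpace ℂ (Fin n)) (hw : ‖w‖ = 1)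
    (lam : ℝ) (hlam : 1 - ε / 2 ≤ lam)
    (heig : Matrix.toEuclideanLin (P - ((ε : ℂ) / 2) • E) w = (lam : ℂ) • w) :
    ‖w - Matrix.toEuclideanLin P w‖ ^ 2 ≤ 5 * ε ^ 2 / 4 := by
  have hEw : ‖Matrix.toEuclideanLin E w‖ ≤ 1 := by
    have h := (LinearMap.toContinuousLinearMap (Matrix.toEuclideanLin E)).le_opNorm w
    rw [hw, mul_one] at h
    exact h.trans hE
  have hsym : (Matrix.toEuclideanLin P).IsSymmetric :=
    Matrix.isSymmetric_toEuclideanLin_iff.mpr hP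
  have hidem : Matrix.toEuclideanLin P (Matrix.toEuclideanLin P w)
      = Matrix.toEuclideanLin P w := by
    conv_rhs => rw [← hP2]
    simp [Matrix.toLpLin_apply]
  rw [map_sub, map_smul, LinearMap.sub_apply, LinearMap.smul_apply] at heig
  set a := Matrix.toEuclideanLin P w with ha
  set e := Matrix.toEuclideanLin E w
  set b := w - a with hb
  have horth : inner ℂ a b = 0 := by
    rw [ha, hsym w b, hb, map_sub, hidem, ← ha, sub_self, inner_zero_right]
  have hwab : w = a + b := by rw [hb]; abel
  have hpyth : ‖a‖ * ‖a‖ + ‖b‖ * ‖b‖ = 1 := by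
    rw [← norm_add_sq_eq_norm_sq_add_norm_sq_of_inner_eq_zero a b horth, ← hwab, hw, mul_one]
  have hkey : ((1 - lam : ℝ) : ℂ) • a + ((-lam : ℝ) : ℂ) • b = ((ε / 2 : ℝ) : ℂ) • e := by
    rw [hwab] at heig
    push_cast
    linear_combination (norm := module) heig
  have hpyth' := norm_add_sq_eq_norm_sq_add_norm_sq_of_inner_eq_zero
    (((1 - lam : ℝ) : ℂ) • a) (((-lam : ℝ) : ℂ) • b)
    (by rw [inner_smul_left, inner_smul_right, horth]; simp)
  rw [hkey] at hpyth'
  simp only [norm_smul, Complex.norm_real, Real.norm_eq_abs, mul_mul_mul_comm,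
    abs_mul_abs_self] at hpyth'
  have he : ‖e‖ * ‖e‖ ≤ 1 := by nlinarith [norm_nonneg e]
  have hlb : lam ^ 2 * ‖b‖ ^ 2 ≤ (ε / 2) ^ 2 := by
    nlinarith [mul_nonneg (mul_self_nonneg (1 - lam)) (mul_self_nonneg ‖a‖),
      mul_le_mul_of_nonneg_left he (sq_nonneg (ε / 2))]
  by_contra! hcon
  have hb1 : ‖b‖ ^ 2 ≤ 1 := by nlinarith [mul_self_nonneg ‖a‖]
  have hε1 : ε < 1 := by nlinarith
  have hl : 1 / 4 ≤ lam ^ 2 := by nlinarith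
  nlinarith [mul_le_mul_of_nonneg_right hl (sq_nonneg ‖b‖), sq_nonneg ε]
end

section
/- Let D be an n×n real diagonal matrix whose diagonal entries are integers, and let O be any n×n complex matrix. Define the n×n matrix Õ by Õ_{ij} = O_{ij} if D_{ii} = D_{jj} and Õ_{ij} = 0 otherwise. Then ‖O·D − D·O‖ ≥ (1/n)·‖O − Õ‖. -/
/-!
Write `d i` for the diagonal entries of `D`. The commutator `C = O D - D O` has entries
`O i j * (d j - d i)`, and distinct integers differ by at least `1`, so each entry of the
off-block part `X = O - Õ` satisfies `|X i j| ≤ |C i j|`. An entry of a matrix is at most its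
operator norm (`norm_entry_le_l2OpNorm`), while by the Cauchy–Schwarz inequality on each row an
`n × n` matrix with entries bounded by `c` has operator norm at most `n * c`
(`l2OpNorm_le_of_entry_le`). Taking `c = ‖C‖` gives `‖X‖ ≤ n ‖C‖`.
-/

open Matrix

lemma norm_entry_le_l2OpNorm {n : ℕ} (M : Matrix (Fin n) (Fin n) ℂ) (i j : Fin n) :
    ‖M i j‖ ≤ l2OpNorm M := by
  have h := (LinearMap.toContinuousLinearMap (Matrix.toEuclideanLin M)).le_opNorm
    (EuclideanSpace.single j (1 : ℂ))
  have h2 := PiLp.norm_apply_le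
    ((LinearMap.toContinuousLinearMap (Matrix.toEuclideanLin M))
      (EuclideanSpace.single j (1 : ℂ))) i
  have h3 : ((LinearMap.toContinuousLinearMap (Matrix.toEuclideanLin M))
      (EuclideanSpace.single j (1 : ℂ))) i = M i j := by
    simp [Matrix.toLpLin_apply]
  rw [h3] at h2
  simpa [l2OpNorm] using h2.trans h

lemma l2OpNorm_le_of_entry_le {n : ℕ} (M : Matrix (Fin n) (Fin n) ℂ) {c : ℝ} (hc : 0 ≤ c)
    (h : ∀ i j, ‖M i j‖ ≤ c) : l2OpNorm M ≤ n * c := by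
  refine ContinuousLinearMap.opNorm_le_bound _ (by positivity) fun x => ?_
  refine le_of_sq_le_sq ?_ (by positivity)
  rw [EuclideanSpace.norm_sq_eq]
  have row : ∀ i, ‖(LinearMap.toContinuousLinearMap (Matrix.toEuclideanLin M) x) i‖ ^ 2
      ≤ n * c ^ 2 * ‖x‖ ^ 2 := by
    intro i
    have e : (LinearMap.toContinuousLinearMap (Matrix.toEuclideanLin M) x) i
        = ∑ j, M i j * x j := by
      simp [Matrix.toLpLin_apply, Matrix.mulVec, dotProduct]
    rw [e]
    calc ‖∑ j, M i j * x j‖ ^ 2 ≤ (∑ j, ‖M i j‖ * ‖x j‖) ^ 2 := by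
          gcongr
          exact (norm_sum_le _ _).trans_eq (by simp)
      _ ≤ (∑ j, ‖M i j‖ ^ 2) * ∑ j, ‖x j‖ ^ 2 := Finset.sum_mul_sq_le_sq_mul_sq _ _ _
      _ ≤ (∑ _j : Fin n, c ^ 2) * ∑ j, ‖x j‖ ^ 2 := by
          gcongr with j
          exact h i j
      _ = n * c ^ 2 * ‖x‖ ^ 2 := by
          rw [EuclideanSpace.norm_sq_eq]; simp
  calc _ ≤ ∑ _i : Fin n, n * c ^ 2 * ‖x‖ ^ 2 := Finset.sum_le_sum fun i _ => row i
    _ = (n * c * ‖x‖) ^ 2 := by simp; ring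

/-- Let `D` be an `n × n` real diagonal matrix with integer diagonal entries and let
`O` be any `n × n` complex matrix.  Let `Õ` be the block-diagonal part of `O`:
`Õ_{ij} = O_{ij}` if `D_{ii} = D_{jj}` and `Õ_{ij} = 0` otherwise.  Then
`‖O·D − D·O‖ ≥ (1/n)·‖O − Õ‖`. -/
theorem commutator_norm_ge_off_block_part
    (n : ℕ) (D : Matrix (Fin n) (Fin n) ℝ) (hD : D.IsDiag)
    (hDint : ∀ i, ∃ k : ℤ, D i i = (k : ℝ))
    (O : Matrix (Fin n) (Fin n) ℂ) :
    l2OpNorm (O * D.map Complex.ofReal - D.map Complex.ofReal * O) ≥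
      (1 / (n : ℝ)) *
        l2OpNorm (O - Matrix.of fun i j => if D i i = D j j then O i j else 0) := by
  set C := O * D.map Complex.ofReal - D.map Complex.ofReal * O with hC
  have hC_apply : ∀ i j, C i j = O i j * ((D j j - D i i : ℝ) : ℂ) := by
    intro i j
    have hd : D.map Complex.ofReal = Matrix.diagonal fun k => (D k k : ℂ) := by
      ext a b
      by_cases hab : a = b
      · subst hab; simp
      · simp [hab, hD hab]
    rw [hC, hd, Matrix.sub_apply, Matrix.mul_diagonal, Matrix.diagonal_mul]
    push_cast
    ring
  have hC_nonneg : 0 ≤ l2OpNorm C := norm_nonneg _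
  have key : l2OpNorm (O - Matrix.of fun i j => if D i i = D j j then O i j else 0)
      ≤ n * l2OpNorm C := by
    refine l2OpNorm_le_of_entry_le _ hC_nonneg fun i j => ?_
    by_cases hij : D i i = D j j
    · simpa [hij] using hC_nonneg
    · refine le_trans ?_ (norm_entry_le_l2OpNorm C i j)
      have gap : 1 ≤ |D j j - D i i| := by
        obtain ⟨a, ha⟩ := hDint i
        obtain ⟨b, hb⟩ := hDint j
        rw [ha, hb] at hij ⊢
        have hne : b - a ≠ 0 := fun h0 => hij (by rw [sub_eq_zero.mp h0])
        exact_mod_cast Int.one_le_abs hne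
      rw [hC_apply, norm_mul, Complex.norm_real, Real.norm_eq_abs]
      simpa [hij] using le_mul_of_one_le_right (norm_nonneg (O i j)) gap
  rcases Nat.eq_zero_or_pos n with hn | hn
  -- For `n = 0` the factor `1 / n` is `0`.
  · subst hn
    simpa using hC_nonneg
  · have hn' : (0 : ℝ) < n := by exact_mod_cast hn
    rw [ge_iff_le, one_div, inv_mul_le_iff₀ hn']
    exact key
end

section
/- Let D be an n×n real diagonal matrix and let O be an n×n complex unitary matrix. Define the n×n matrix Õ by Õ_{ij} = O_{ij} if D_{ii} = D_{jj} and Õ_{ij} = 0 otherwise (the block-diagonal part of O with respect to the eigenspaces of D). Then there exists an n×n complex unitary matrix V with V·D = D·V such that ‖O − V‖ ≤ 2·‖O − Õ‖. -/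
/-!
The unitary `V` is the unitary polar factor of `A := Õ`. Put `δ := ‖O - A‖`.

If `δ ≥ 1`, then `V = 1` works, since two unitaries are at distance at most `2`.

If `δ < 1`, then `A = O (1 - O⋆ (O - A))` is invertible, so `V = A |A|⁻¹` is unitary. The block
part `A` commutes with the Hermitian matrix `D`, hence so do `|A|` and `V`. Moreover
`‖A - V‖ = ‖|A| - 1‖`, and the spectrum of `|A|` lies in `[1 - δ, 1 + δ]`: above by
`‖|A|‖ = ‖A‖ ≤ 1 + δ`, and below because for `0 ≤ r < 1 - δ` the element
`V (r - |A|) = rV - A` is within distance `r + δ < 1` of the unitary `-O`, hence invertible.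
So `‖A - V‖ ≤ δ`, and the triangle inequality gives `‖O - V‖ ≤ 2δ`.

The case `δ < 1` is carried out in an arbitrary unital C⋆-algebra
(`exists_unitary_close_of_norm_sub_lt_one`).
-/


open Matrix

section CStar

variable {A : Type*} [CStarAlgebra A]

/-- The open unit ball around a unitary consists of units. -/
lemma isUnit_of_norm_unitary_sub_lt_one {u a : A} (hu : u ∈ unitary A) (h : ‖u - a‖ < 1) :
    IsUnit a := by
  have h1 : ‖star u * (u - a)‖ < 1 := by
    rwa [CStarRing.norm_mem_unitary_mul _ (Unitary.star_mem hu)]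
  have h2 : u * (1 - star u * (u - a)) = a := by
    rw [mul_sub, ← mul_assoc, Unitary.mul_star_self_of_mem hu]
    simp
  rw [← h2]
  exact (Unitary.toUnits ⟨u, hu⟩).isUnit.mul (Units.oneSub _ h1).isUnit

variable [PartialOrder A] [StarOrderedRing A]

/-- An invertible `a` has a unitary polar factor `v`, and `v` commutes with every self-adjoint
element commuting with `a`. -/
lemma exists_polar_of_isUnit {a : A} (ha : IsUnit a) :
    ∃ v ∈ unitary A, a = v * CFC.abs a ∧ ∀ d : A, IsSelfAdjoint d → Commute a d → Commute v d := by
  have hpp := CFC.abs_mul_abs a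
  have hps : star (CFC.abs a) = CFC.abs a := (CFC.abs_nonneg a).isSelfAdjoint
  have hcomm : ∀ d : A, IsSelfAdjoint d → Commute a d → Commute (CFC.abs a) d :=
    fun d hd had => had.cfcAbs_left (by rwa [hd.star_eq])
  have hp : IsUnit (CFC.abs a) := by
    have : IsUnit (CFC.abs a * CFC.abs a) := hpp ▸ ha.star.mul ha
    exact ((Commute.refl (CFC.abs a)).isUnit_mul_iff.mp this).1
  obtain ⟨p, hp⟩ := hp
  rw [← hp] at hpp hps hcomm ⊢
  have hpi : star (↑p⁻¹ : A) = ↑p⁻¹ := by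
    have : star p = p := Units.ext hps
    rw [← Units.coe_star, star_inv, this]
  have hv : star (a * ↑p⁻¹) * (a * ↑p⁻¹) = 1 := by
    calc star (a * ↑p⁻¹) * (a * ↑p⁻¹) = ↑p⁻¹ * (star a * a) * ↑p⁻¹ := by
          rw [star_mul, hpi]; simp only [mul_assoc]
      _ = 1 := by rw [← hpp]; simp
  refine ⟨a * ↑p⁻¹, ?_, by simp, fun d hd had => had.mul_left (hcomm d hd had).units_inv_left⟩
  have hU : IsUnit (a * ↑p⁻¹) := ha.mul p⁻¹.isUnit
  -- a left inverse of a unit is also a right inverse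
  refine Unitary.mem_iff.mpr ⟨hv, hU.mul_right_cancel ?_⟩
  rw [mul_assoc, hv, mul_one, one_mul]

/-- An element at distance `< 1` from a unitary `u` is at least as close to its own unitary polar
factor as to `u`. -/
lemma exists_unitary_close_of_norm_sub_lt_one {u a : A} (hu : u ∈ unitary A)
    (h : ‖u - a‖ < 1) :
    ∃ v ∈ unitary A, ‖a - v‖ ≤ ‖u - a‖ ∧
      ∀ d : A, IsSelfAdjoint d → Commute a d → Commute v d := by
  obtain ⟨v, hv, hav, hcomm⟩ := exists_polar_of_isUnit (isUnit_of_norm_unitary_sub_lt_one hu h)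
  refine ⟨v, hv, ?_, hcomm⟩
  obtain _ | _ := subsingleton_or_nontrivial A
  · rw [Subsingleton.elim (a - v) (u - a)]
  have hsa : IsSelfAdjoint (CFC.abs a) := (CFC.abs_nonneg a).isSelfAdjoint
  have h1 : a - v = v * (CFC.abs a - 1) := by rw [mul_sub, ← hav, mul_one]
  have h2 : CFC.abs a - 1 = cfc (fun x : ℝ => x - 1) (CFC.abs a) := by
    rw [cfc_sub (fun x : ℝ => x) (fun _ => 1) (CFC.abs a), cfc_id' ℝ (CFC.abs a),
      cfc_const_one ℝ (CFC.abs a)]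
  rw [h1, CStarRing.norm_mem_unitary_mul _ hv, h2]
  refine norm_cfc_le (norm_nonneg _) fun r hr => ?_
  have hr0 : 0 ≤ r := spectrum_nonneg_of_nonneg (CFC.abs_nonneg a) hr
  rw [Real.norm_eq_abs, abs_le]
  constructor
  · by_contra! hlt
    refine hr ?_
    have h3 : -v * (algebraMap ℝ A r - CFC.abs a) = a - r • v := by
      rw [mul_sub, neg_mul, neg_mul, ← hav, ← Algebra.commutes, ← Algebra.smul_def]
      abel
    have h4 : IsUnit (a - r • v) := by
      refine isUnit_of_norm_unitary_sub_lt_one hu ?_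
      calc ‖u - (a - r • v)‖ = ‖(u - a) + r • v‖ := by congr 1; abel
        _ ≤ ‖u - a‖ + r := by
            refine (norm_add_le _ _).trans ?_
            rw [norm_smul, CStarRing.norm_of_mem_unitary hv, Real.norm_of_nonneg hr0, mul_one]
        _ < 1 := by linarith
    rw [← h3] at h4
    have hvu : IsUnit (-v) := (Unitary.toUnits ⟨v, hv⟩).isUnit.neg
    exact hvu.mul_left_iff.mp h4
  · have h5 : ‖r‖ ≤ ‖CFC.abs a‖ := spectrum.norm_le_norm_of_mem hr
    rw [CFC.norm_abs, Real.norm_of_nonneg hr0] at h5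
    have h6 : ‖a‖ ≤ ‖u‖ + ‖u - a‖ := by
      have := norm_sub_le u (u - a)
      rwa [sub_sub_cancel] at this
    rw [CStarRing.norm_of_mem_unitary hu] at h6
    linarith

end CStar

open scoped Matrix.Norms.L2Operator MatrixOrder in
/-- Let `D` be an `n × n` real diagonal matrix and let `O` be an `n × n` complex
unitary matrix.  Let `Õ` be the block-diagonal part of `O` with respect to the
eigenspaces of `D`: `Õ_{ij} = O_{ij}` if `D_{ii} = D_{jj}` and `Õ_{ij} = 0` otherwise.
Then there exists an `n × n` complex unitary matrix `V` commuting with `D` such that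
`‖O − V‖ ≤ 2·‖O − Õ‖`. -/
theorem exists_commuting_unitary_close_of_block_part
    (n : ℕ) (D : Matrix (Fin n) (Fin n) ℝ) (hD : D.IsDiag)
    (O : Matrix (Fin n) (Fin n) ℂ) (hO : O ∈ Matrix.unitaryGroup (Fin n) ℂ) :
    ∃ V ∈ Matrix.unitaryGroup (Fin n) ℂ,
      V * D.map Complex.ofReal = D.map Complex.ofReal * V ∧
      l2OpNorm (O - V) ≤
        2 * l2OpNorm (O - Matrix.of fun i j => if D i i = D j j then O i j else 0) := by
  have hnorm : ∀ M : Matrix (Fin n) (Fin n) ℂ, l2OpNorm M = ‖M‖ := fun _ => rfl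
  simp only [hnorm]
  set A : Matrix (Fin n) (Fin n) ℂ := Matrix.of fun i j => if D i i = D j j then O i j else 0
    with hA
  obtain hlt | hge := lt_or_ge ‖O - A‖ 1
  · obtain ⟨d, rfl⟩ : ∃ d, D = Matrix.diagonal d := ⟨_, hD.diagonal_diag.symm⟩
    have hmap : (Matrix.diagonal d).map Complex.ofReal
        = Matrix.diagonal fun i => (d i : ℂ) := Matrix.diagonal_map (by simp)
    rw [hmap]
    obtain ⟨V, hV, hle, hcomm⟩ := exists_unitary_close_of_norm_sub_lt_one hO hlt
    refine ⟨V, hV, hcomm _ ?_ ?_, ?_⟩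
    · rw [IsSelfAdjoint, Matrix.star_eq_conjTranspose, Matrix.diagonal_conjTranspose]
      congr 1
      ext i
      simp
    · ext i j
      rw [Matrix.mul_diagonal, Matrix.diagonal_mul, hA, Matrix.of_apply]
      simp only [Matrix.diagonal_apply_eq]
      split_ifs with hij
      · rw [hij, mul_comm]
      · simp
    · have := norm_sub_le_norm_sub_add_norm_sub O A V
      linarith
  · refine ⟨1, one_mem _, by simp, ?_⟩
    have h1 : ∀ U ∈ Matrix.unitaryGroup (Fin n) ℂ, ‖U‖ ≤ 1 := fun U hU => by
      obtain _ | _ := subsingleton_or_nontrivial (Matrix (Fin n) (Fin n) ℂ)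
      · rw [Subsingleton.elim U 0, norm_zero]
        exact zero_le_one
      · exact (CStarRing.norm_of_mem_unitary hU).le
    have := norm_sub_le O 1
    linarith [h1 O hO, h1 1 (one_mem _)]
end

section
/- Let X be an n×n complex unitary matrix, let P = diag(f₁,…,fₙ) be a real diagonal matrix whose diagonal entries f₁,…,fₙ are nonnegative integers, and let ε ≥ 0. If ‖X·P·X* − P‖ ≤ 2ε, then there exists an n×n complex unitary matrix O with O·P = P·O such that ‖X − O‖ ≤ 4nε. -/
/-!
Put `δ = 2ε` and let `D` be the part of `X` supported on the pairs `(i, j)` with `f i = f j`, so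
that `D` commutes with `P`. Since `X` is unitary, `‖X P - P X‖ ≤ δ`, and the entries of `X P - P X`
are `X i j * (f j - f i)`. Distinct integers differ by at least `1`, so the entries of `X - D` are
dominated by those of `X P - P X`; comparing Hilbert–Schmidt norms (`norm_le_of_entry_le`) gives
`‖X - D‖ ≤ √n δ ≤ B := 2nε`.

If `B ≥ 1`, then `O = 1` works because `‖X - 1‖ ≤ 2`. If `B < 1`, then `D` is invertible, and its
unitary polar factor `O = D |D|⁻¹` commutes with `P` and satisfies `‖D - O‖ ≤ B`
(`exists_unitary_commute_norm_sub_le`), because `‖D‖ ≤ 1 + B` and `‖D⁻¹‖ ≤ 1 / (1 - B)` confine the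
spectrum of `|D|` to `[1 - B, 1 + B]`. In both cases `‖X - O‖ ≤ 2B = 4nε`.
-/


open Matrix

open scoped Matrix.Norms.L2Operator MatrixOrder

/-- The polar factor of an element `d` close to a unitary `x` is as close to `d` as `x` is, and it
commutes with every self-adjoint `p` that commutes with `d`. -/
lemma exists_unitary_commute_norm_sub_le {A : Type*} [CStarAlgebra A] [PartialOrder A]
    [StarOrderedRing A] {x d p : A} {B : ℝ} (hx : x ∈ unitary A) (hB : B < 1)
    (hxd : ‖x - d‖ ≤ B) (hp : star p = p) (hdp : Commute p d) :
    ∃ o ∈ unitary A, Commute o p ∧ ‖d - o‖ ≤ B := by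
  have hB0 : 0 ≤ B := (norm_nonneg _).trans hxd
  rcases subsingleton_or_nontrivial A with hA | hA
  · exact ⟨1, one_mem _, Commute.one_left p, by simpa [Subsingleton.elim d 1] using hB0⟩
  have hxx : star x * x = 1 := Unitary.star_mul_self_of_mem hx
  have hxx' : x * star x = 1 := Unitary.mul_star_self_of_mem hx
  -- `star x * d` is within distance `B < 1` of `1`.
  have hd : IsUnit d := by
    have h1 : IsUnit (1 - star x * (x - d)) := by
      apply isUnit_one_sub_of_norm_lt_one
      rw [CStarRing.norm_mem_unitary_mul _ (Unitary.star_mem hx)]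
      exact hxd.trans_lt hB
    have h2 : 1 - star x * (x - d) = star x * d := by rw [mul_sub, hxx]; abel
    have h3 : d = x * (star x * d) := by rw [← mul_assoc, hxx', one_mul]
    rw [h3, ← h2]
    exact IsUnit.mul ⟨⟨x, star x, hxx', hxx⟩, rfl⟩ h1
  obtain ⟨u, rfl⟩ := hd
  set s : A := CFC.abs (u : A) with hs
  have hss : s * s = star (u : A) * u := CFC.abs_mul_abs _
  have hsa : IsSelfAdjoint s := (CFC.abs_nonneg (u : A)).isSelfAdjoint
  have hsu : IsUnit s := by
    have : IsUnit (s * s) := by rw [hss]; exact u.isUnit.star.mul u.isUnit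
    exact ((Commute.refl s).isUnit_mul_iff.1 this).1
  obtain ⟨v, hv⟩ := hsu
  have hps : Commute p (v : A) := by
    rw [hv]
    exact hdp.symm.cfcAbs_right (hp.symm ▸ hdp.symm)
  have hvsa : star (↑v⁻¹ : A) = ↑v⁻¹ := by
    have h1 : star v = v := Units.ext (by rw [Units.coe_star, hv]; exact hsa)
    rw [← Units.coe_star, star_inv, h1]
  have ho : (u : A) * ↑v⁻¹ ∈ unitary A := by
    have h1 : star ((u : A) * ↑v⁻¹) * ((u : A) * ↑v⁻¹) = 1 := by
      rw [star_mul, hvsa, mul_assoc, ← mul_assoc (star (u : A)), ← hss, ← hv]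
      simp
    refine Unitary.mem_iff.2 ⟨h1, ?_⟩
    have h2 := (u * v⁻¹).isUnit
    exact (h2.mul_left_inj).1 (by
      rw [Units.val_mul, mul_assoc, h1, mul_one, one_mul])
  refine ⟨u * ↑v⁻¹, ho, (hdp.mul_right hps.units_inv_right).symm, ?_⟩
  have hsplit : (u : A) - u * ↑v⁻¹ = (u * ↑v⁻¹) * (s - 1) := by
    rw [← hv, mul_sub, mul_one, mul_assoc, Units.inv_mul, mul_one]
  rw [hsplit, CStarRing.norm_mem_unitary_mul _ ho]
  have hnx : ‖x‖ = 1 := CStarRing.norm_of_mem_unitary hx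
  have hns : ‖s‖ ≤ 1 + B := by
    rw [hs, CFC.norm_abs]
    calc ‖(u : A)‖ = ‖x - (x - u)‖ := by rw [sub_sub_cancel]
      _ ≤ ‖x‖ + ‖x - u‖ := norm_sub_le _ _
      _ ≤ 1 + B := by rw [hnx]; gcongr
  -- From `x * d⁻¹ = 1 + (x - d) * d⁻¹`.
  have hnu : ‖(↑u⁻¹ : A)‖ * (1 - B) ≤ 1 := by
    have h1 : x * ↑u⁻¹ = 1 + (x - u) * ↑u⁻¹ := by rw [sub_mul, Units.mul_inv]; abel
    have h2 : ‖(↑u⁻¹ : A)‖ ≤ 1 + B * ‖(↑u⁻¹ : A)‖ := by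
      calc ‖(↑u⁻¹ : A)‖ = ‖1 + (x - u) * ↑u⁻¹‖ := by
            rw [← h1, CStarRing.norm_mem_unitary_mul _ hx]
        _ ≤ ‖(1 : A)‖ + ‖(x - u)‖ * ‖(↑u⁻¹ : A)‖ :=
            (norm_add_le _ _).trans (by gcongr; exact norm_mul_le _ _)
        _ ≤ 1 + B * ‖(↑u⁻¹ : A)‖ := by rw [norm_one]; gcongr
    linarith
  have hnv : ‖(↑v⁻¹ : A)‖ = ‖(↑u⁻¹ : A)‖ := by
    have h1 : (↑v⁻¹ : A) = ↑u⁻¹ * (u * ↑v⁻¹) := by rw [← mul_assoc, Units.inv_mul, one_mul]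
    rw [h1, CStarRing.norm_mul_mem_unitary _ ho]
  have hcfc : cfc (fun t : ℝ => t - 1) s = s - 1 := by
    rw [cfc_sub (fun t : ℝ => t) (fun _ => 1) s, cfc_id' ℝ s, cfc_const_one ℝ s]
  rw [← hcfc]
  refine norm_cfc_le hB0 fun t ht => ?_
  have ht0 : 0 ≤ t := spectrum_nonneg_of_nonneg (CFC.abs_nonneg (u : A)) ht
  have ht1 : ‖t‖ ≤ ‖s‖ := spectrum.norm_le_norm_of_mem ht
  rw [← hv] at ht
  have htne : t ≠ 0 := spectrum.ne_zero_of_mem_of_unit ht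
  have ht2 : ‖t⁻¹‖ ≤ ‖(↑v⁻¹ : A)‖ := by
    apply spectrum.norm_le_norm_of_mem (𝕜 := ℝ)
    exact (spectrum.inv_mem_iff (r := Units.mk0 t htne) (a := v)).1 ht
  have htpos : 0 < t := lt_of_le_of_ne ht0 htne.symm
  rw [Real.norm_of_nonneg ht0] at ht1
  rw [Real.norm_of_nonneg (inv_nonneg.2 ht0), hnv] at ht2
  have h3 : t⁻¹ * (1 - B) ≤ 1 :=
    (mul_le_mul_of_nonneg_right ht2 (by linarith)).trans hnu
  have h4 : 1 - B ≤ t := by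
    rwa [inv_mul_le_iff₀ htpos, mul_one] at h3
  rw [Real.norm_eq_abs, abs_le]
  constructor <;> linarith

/-- Entrywise domination costs at most a factor `n` in operator norm: the squared operator norm of
`M` is at most the sum of the squared moduli of its entries, which is at most the sum over the
columns of `N` of their squared lengths, each at most `‖N‖ ^ 2`. -/
lemma norm_le_of_entry_le {n : ℕ} (M N : Matrix (Fin n) (Fin n) ℂ)
    (hMN : ∀ i j, ‖M i j‖ ≤ ‖N i j‖) : ‖M‖ ≤ n * ‖N‖ := by
  have hcol : ∀ j, ∑ i, ‖N i j‖ ^ 2 ≤ ‖N‖ ^ 2 := fun j => by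
    have h := N.l2_opNorm_mulVec (EuclideanSpace.single j (1 : ℂ))
    have h2 := pow_le_pow_left₀ (norm_nonneg _) h 2
    rw [EuclideanSpace.norm_sq_eq] at h2
    simpa using h2
  have hsum : ∑ i, ∑ j, ‖M i j‖ ^ 2 ≤ n * ‖N‖ ^ 2 := by
    calc ∑ i, ∑ j, ‖M i j‖ ^ 2 ≤ ∑ i, ∑ j, ‖N i j‖ ^ 2 := by
          gcongr with i _ j _; exact hMN i j
      _ = ∑ j, ∑ i, ‖N i j‖ ^ 2 := Finset.sum_comm
      _ ≤ ∑ _j : Fin n, ‖N‖ ^ 2 := Finset.sum_le_sum fun j _ => hcol j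
      _ = n * ‖N‖ ^ 2 := by simp
  rw [Matrix.cstar_norm_def]
  refine ContinuousLinearMap.opNorm_le_bound _ (by positivity) fun v => ?_
  rw [← sq_le_sq₀ (norm_nonneg _) (by positivity), EuclideanSpace.norm_sq_eq, mul_pow,
    EuclideanSpace.norm_sq_eq v]
  have hrow : ∀ i, ‖(toEuclideanCLM (n := Fin n) (𝕜 := ℂ) M v) i‖ ^ 2
      ≤ (∑ j, ‖M i j‖ ^ 2) * ∑ j, ‖v j‖ ^ 2 := fun i => by
    have h1 : ‖(toEuclideanCLM (n := Fin n) (𝕜 := ℂ) M v) i‖ ≤ ∑ j, ‖M i j‖ * ‖v j‖ := by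
      simp only [ofLp_toEuclideanCLM, Matrix.mulVec, dotProduct]
      exact (norm_sum_le _ _).trans (by simp)
    exact (pow_le_pow_left₀ (norm_nonneg _) h1 2).trans (Finset.sum_mul_sq_le_sq_mul_sq _ _ _)
  have hn : (n : ℝ) ≤ n ^ 2 := by exact_mod_cast Nat.le_self_pow two_ne_zero n
  calc _ ≤ ∑ i, (∑ j, ‖M i j‖ ^ 2) * ∑ j, ‖v j‖ ^ 2 := Finset.sum_le_sum fun i _ => hrow i
    _ = (∑ i, ∑ j, ‖M i j‖ ^ 2) * ∑ j, ‖v j‖ ^ 2 := by rw [Finset.sum_mul]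
    _ ≤ _ := by
      gcongr
      calc _ ≤ n * ‖N‖ ^ 2 := hsum
        _ ≤ n ^ 2 * ‖N‖ ^ 2 := by gcongr
        _ = _ := by ring

/-- Let `X` be an `n × n` complex unitary matrix, let `P = diag(f₁,…,fₙ)` be a
diagonal matrix whose entries `fᵢ` are nonnegative integers, and let `ε ≥ 0`.
If `‖X·P·X* − P‖ ≤ 2ε`, then there exists an `n × n` complex unitary matrix `O`
commuting with `P` such that `‖X − O‖ ≤ 4nε`. -/
theorem exists_commuting_unitary_of_almost_preserving_diagonal
    (n : ℕ) (X : Matrix (Fin n) (Fin n) ℂ) (hX : X ∈ Matrix.unitaryGroup (Fin n) ℂ)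
    (f : Fin n → ℕ) (ε : ℝ) (hε : 0 ≤ ε)
    (h : l2OpNorm (X * Matrix.diagonal (fun i => (f i : ℂ)) * Xᴴ
          - Matrix.diagonal (fun i => (f i : ℂ))) ≤ 2 * ε) :
    ∃ O ∈ Matrix.unitaryGroup (Fin n) ℂ,
      O * Matrix.diagonal (fun i => (f i : ℂ)) = Matrix.diagonal (fun i => (f i : ℂ)) * O ∧
      l2OpNorm (X - O) ≤ 4 * n * ε := by
  have hnorm : ∀ M : Matrix (Fin n) (Fin n) ℂ, l2OpNorm M = ‖M‖ := fun _ => rfl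
  rw [hnorm] at h
  simp only [hnorm]
  set P : Matrix (Fin n) (Fin n) ℂ := Matrix.diagonal (fun i => (f i : ℂ)) with hP
  have hXX : Xᴴ * X = 1 := Unitary.star_mul_self_of_mem hX
  have hcomm : ‖X * P - P * X‖ ≤ 2 * ε := by
    have h1 : X * P - P * X = (X * P * Xᴴ - P) * X := by
      rw [sub_mul, mul_assoc (X * P), hXX, mul_one]
    rwa [h1, CStarRing.norm_mul_mem_unitary _ hX]
  let D : Matrix (Fin n) (Fin n) ℂ := Matrix.of fun i j => if f i = f j then X i j else 0
  have hPD : Commute P D := by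
    ext i j
    rw [hP, Matrix.diagonal_mul, Matrix.mul_diagonal]
    by_cases hij : f i = f j
    · rw [hij, mul_comm]
    · simp [D, hij]
  have hXD : ‖X - D‖ ≤ 2 * n * ε := by
    have h1 : ‖X - D‖ ≤ n * ‖X * P - P * X‖ := by
      refine norm_le_of_entry_le _ _ fun i j => ?_
      rw [Matrix.sub_apply, Matrix.sub_apply, hP, Matrix.diagonal_mul, Matrix.mul_diagonal]
      by_cases hij : f i = f j
      · simp [D, hij]
      · have h2 : X i j * (f j : ℂ) - (f i : ℂ) * X i j
            = X i j * (((f j : ℤ) - (f i : ℤ) : ℤ) : ℂ) := by push_cast; ring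
        have h3 : (1 : ℝ) ≤ ‖(((f j : ℤ) - (f i : ℤ) : ℤ) : ℂ)‖ := by
          rw [Complex.norm_intCast]
          exact_mod_cast Int.one_le_abs (by omega : (f j : ℤ) - (f i : ℤ) ≠ 0)
        rw [h2, norm_mul]
        simpa [D, hij] using le_mul_of_one_le_right (norm_nonneg (X i j)) h3
    have h2 : (n : ℝ) * ‖X * P - P * X‖ ≤ n * (2 * ε) := by gcongr
    linarith
  rcases lt_or_ge (2 * n * ε) 1 with hB | hB
  · have hPs : star P = P := by
      rw [hP, Matrix.star_eq_conjTranspose, Matrix.diagonal_conjTranspose]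
      congr 1
      ext i
      simp
    obtain ⟨O, hO, hOP, hDO⟩ := exists_unitary_commute_norm_sub_le hX hB hXD hPs hPD
    refine ⟨O, hO, hOP, ?_⟩
    have := norm_sub_le_norm_sub_add_norm_sub X D O
    linarith
  · refine ⟨1, one_mem _, by rw [one_mul, mul_one], ?_⟩
    have h0 : ∀ U ∈ Matrix.unitaryGroup (Fin n) ℂ, ‖U‖ ≤ 1 := fun U hU => by
      nontriviality Matrix (Fin n) (Fin n) ℂ
      exact (CStarRing.norm_of_mem_unitary hU).le
    have h1 := norm_sub_le X 1
    have h2 := h0 X hX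
    have h3 := h0 1 (one_mem _)
    linarith
end
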